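/- arXiv:1201.0803 — 2 statements merged into one kernel-verified Lean document; each statement's English description precedes it below -/
import Mathlib

section
/- Suppose G is a primitive group of permutations of an infinite set Ω and α ∈ Ω. If the cardinalities of the orbits of the point stabilizer G_α on Ω are bounded above by a finite cardinal, then G_α is a finite group. -/
/-- A group `G` acts primitively on `Ω` if it acts transitively and the only
`G`-invariant equivalence relations on `Ω` are the universal and the trivial ones. -/
def IsPrimitive (G Ω : Type*) [Group G] [MulAction G Ω] : Prop :=
  MulAction.IsPretransitive G Ω ∧
    ∀ r : Ω → Ω → Prop, Equivalence r →
      (∀ (g : G) (x y : Ω), r x y → r (g • x) (g • y)) →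
      (∀ x y : Ω, r x y) ∨ (∀ x y : Ω, r x y → x = y)

/-!
If all orbits of all point stabilizers have at most `n` elements, then some normal subgroup `N`
is commensurable with every point stabilizer (a theorem of Schlichting and of Bergman and Lenstra).
Call a subgroup large if it meets each point stabilizer in a subgroup of finite index, and let `m`
be the least uniform bound on the orbits of a large subgroup; call a large subgroup attaining this
bound strong, and let `N` be generated by all strong subgroups. If `K` is strong and `K • x` has
`m` elements, then every strong `L ≥ K` satisfies `L • x = K • x`, and so does the group that all
these `L` generate; hence all orbits of the latter group have at most `m * n` elements. As strong
subgroups are closed under intersection, `N` is the directed union of these groups as `K` varies,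
so its orbits satisfy the same bound.

In a primitive group, `N` is trivial or transitive. In the first case the stabilizers are finite
because they are commensurable with `1`, in the second `Ω` is a finite orbit of `N`.
-/

open MulAction Set
open scoped Pointwise

theorem encard_biUnion_le_mul {ι β : Type*} {s : Set ι} {f : ι → Set β} {k n : ℕ}
    (hs : s.encard ≤ k) (hf : ∀ i ∈ s, (f i).encard ≤ n) :
    (⋃ i ∈ s, f i).encard ≤ (k * n : ℕ) := by
  have hfin : s.Finite := finite_of_encard_le_coe hs
  calc (⋃ i ∈ s, f i).encard
      ≤ ∑ i ∈ hfin.toFinset, (f i).encard := by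
        simpa using hfin.toFinset.set_encard_biUnion_le f
    _ ≤ ∑ _i ∈ hfin.toFinset, (n : ℕ∞) := Finset.sum_le_sum fun i hi ↦ hf i (by simpa using hi)
    _ = s.encard * n := by simp [hfin.encard_eq_coe_toFinset_card]
    _ ≤ (k * n : ℕ) := by push_cast; gcongr

theorem encard_iUnion_le_of_directed {ι β : Type*} {f : ι → Set β} {k : ℕ}
    (hd : Directed (· ⊆ ·) f) (hf : ∀ i, (f i).encard ≤ k) : (⋃ i, f i).encard ≤ k := by
  cases isEmpty_or_nonempty ι
  · simp
  by_contra! hlt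
  obtain ⟨t, htsub, htcard⟩ := exists_subset_encard_eq (Order.add_one_le_of_lt hlt)
  have htfin : t.Finite := finite_of_encard_le_coe (k := k + 1) (by simp [htcard])
  obtain ⟨i, hi⟩ := hd.exists_mem_subset_of_finset_subset_biUnion (s := htfin.toFinset)
    (by simpa using htsub)
  rw [htfin.coe_toFinset] at hi
  have hle : ((k + 1 : ℕ) : ℕ∞) ≤ k := by
    simpa [htcard] using (encard_le_encard hi).trans (hf i)
  exact absurd (Nat.cast_le.mp hle) (by omega)

section Orbits

variable {G Ω : Type*} [Group G] [MulAction G Ω]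

theorem orbit_subset_orbit_of_le {K L : Subgroup G} (h : K ≤ L) (x : Ω) :
    orbit K x ⊆ orbit L x := by
  rintro _ ⟨g, rfl⟩
  exact ⟨⟨g, h g.2⟩, rfl⟩

theorem orbit_conj_smul (g : G) (K : Subgroup G) (x : Ω) :
    orbit (MulAut.conj g • K : Subgroup G) x = g • orbit K (g⁻¹ • x) := by
  ext y
  simp [mem_orbit_iff, Set.mem_smul_set, Subgroup.mem_smul_pointwise_iff_exists, mul_smul]

theorem stabilizer_relIndex_ne_zero_iff {K : Subgroup G} {x : Ω} :
    (stabilizer G x).relIndex K ≠ 0 ↔ (orbit K x).Finite := by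
  have hindex : (stabilizer G x).relIndex K = (orbit K x).ncard := index_stabilizer K x
  rw [hindex, ← Nat.pos_iff_ne_zero]
  exact ⟨finite_of_ncard_pos, fun h ↦ (ncard_pos h).mpr (nonempty_orbit x)⟩

theorem relIndex_conj_smul_stabilizer (g : G) (K : Subgroup G) (x : Ω) :
    (MulAut.conj g • K).relIndex (stabilizer G (g • x)) = K.relIndex (stabilizer G x) := by
  rw [stabilizer_smul_eq_stabilizer_map_conj]
  exact Subgroup.relIndex_pointwise_smul _ _ _

theorem orbit_subset_biUnion_orbit_stabilizer {K M : Subgroup G} {x : Ω}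
    (h : orbit M x ⊆ orbit K x) (y : Ω) :
    orbit M y ⊆ ⋃ z ∈ orbit K y, orbit (stabilizer G x) z := by
  rintro _ ⟨g, rfl⟩
  obtain ⟨k, hk⟩ := h (mem_orbit x g⁻¹)
  have hfix : (g * k : G) ∈ stabilizer G x := by
    have hk' : (k : G) • x = (g : G)⁻¹ • x := hk
    rw [mem_stabilizer_iff, mul_smul, hk', smul_inv_smul]
  refine mem_biUnion (mem_orbit y k⁻¹) ⟨⟨g * k, hfix⟩, ?_⟩
  simp [Subgroup.smul_def, mul_smul]

theorem encard_orbit_stabilizer_le [IsPretransitive G Ω] {n : ℕ} {x : Ω}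
    (h : ∀ y : Ω, (orbit (stabilizer G x) y).encard ≤ n) (x' y : Ω) :
    (orbit (stabilizer G x') y).encard ≤ n := by
  obtain ⟨g, rfl⟩ := exists_smul_eq G x x'
  have hconj : stabilizer G (g • x) = MulAut.conj g • stabilizer G x :=
    stabilizer_smul_eq_stabilizer_map_conj g x
  rw [hconj, orbit_conj_smul, encard_smul_set]
  exact h _

end Orbits

section Schlichting

variable {G Ω : Type*} [Group G] [MulAction G Ω]

/-- A subgroup is `m`-strong if it meets every point stabilizer in a subgroup of finite index
and all its orbits have at most `m` elements. Recall that `Subgroup.relIndex` is zero when the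
index is infinite. -/
structure IsStrong (Ω : Type*) [MulAction G Ω] (m : ℕ) (K : Subgroup G) : Prop where
  relIndex_stabilizer_ne_zero (x : Ω) : K.relIndex (stabilizer G x) ≠ 0
  encard_orbit_le (x : Ω) : (orbit K x).encard ≤ m

/-- The subgroup generated by the `m`-strong subgroups containing `K`. For `K = ⊥` it is the normal
subgroup of Schlichting's theorem, and the `strongJoin`s of the strong `K` exhaust it. -/
def strongJoin (Ω : Type*) [MulAction G Ω] (m : ℕ) (K : Subgroup G) : Subgroup G :=
  sSup {L | IsStrong Ω m L ∧ K ≤ L}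

variable {m n : ℕ} {K L : Subgroup G}

theorem isStrong_stabilizer (h : ∀ x y : Ω, (orbit (stabilizer G x) y).encard ≤ n) (x : Ω) :
    IsStrong Ω n (stabilizer G x) where
  relIndex_stabilizer_ne_zero y :=
    stabilizer_relIndex_ne_zero_iff.mpr (finite_of_encard_le_coe (h y x))
  encard_orbit_le := h x

theorem IsStrong.conj_smul (hK : IsStrong Ω m K) (g : G) : IsStrong Ω m (MulAut.conj g • K) where
  relIndex_stabilizer_ne_zero x := by
    rw [← smul_inv_smul g x, relIndex_conj_smul_stabilizer]
    exact hK.relIndex_stabilizer_ne_zero _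
  encard_orbit_le x := by
    rw [orbit_conj_smul, encard_smul_set]
    exact hK.encard_orbit_le _

theorem IsStrong.inf (hK : IsStrong Ω m K) (hL : IsStrong Ω n L) : IsStrong Ω m (K ⊓ L) where
  relIndex_stabilizer_ne_zero x := Subgroup.relIndex_inf_ne_zero
    (hK.relIndex_stabilizer_ne_zero x) (hL.relIndex_stabilizer_ne_zero x)
  encard_orbit_le x := (encard_le_encard (orbit_subset_orbit_of_le inf_le_left x)).trans
    (hK.encard_orbit_le x)

theorem IsStrong.exists_encard_orbit_eq [Nonempty Ω]
    (hm : IsLeast {k | ∃ K : Subgroup G, IsStrong Ω k K} m) (hK : IsStrong Ω m K) :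
    ∃ x : Ω, (orbit K x).encard = m := by
  by_contra! hne
  have hlt (x : Ω) : (orbit K x).encard < m := (hK.encard_orbit_le x).lt_of_ne (hne x)
  cases m with
  | zero => exact not_lt_zero (hlt (Classical.arbitrary Ω))
  | succ k =>
    have hstrong : IsStrong Ω k K :=
      ⟨hK.relIndex_stabilizer_ne_zero, fun x ↦ Order.le_of_lt_add_one (hlt x)⟩
    exact (hm.2 ⟨K, hstrong⟩).not_gt k.lt_succ_self

theorem IsStrong.le_strongJoin_of_le (hL : IsStrong Ω m L) (hKL : K ≤ L) : L ≤ strongJoin Ω m K :=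
  le_sSup ⟨hL, hKL⟩

theorem strongJoin_antitone : Antitone (strongJoin Ω m : Subgroup G → Subgroup G) :=
  fun _ _ h ↦ sSup_le_sSup fun _ hL ↦ ⟨hL.1, h.trans hL.2⟩

theorem orbit_strongJoin_subset {x : Ω} (hx : (orbit K x).encard = m) :
    orbit (strongJoin Ω m K) x ⊆ orbit K x := by
  have horbit {L : Subgroup G} (hL : IsStrong Ω m L) (hKL : K ≤ L) : orbit K x = orbit L x :=
    (finite_of_encard_eq_coe hx).eq_of_subset_of_encard_le (orbit_subset_orbit_of_le hKL x)
      (hx ▸ hL.encard_orbit_le x)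
  have hstab : strongJoin Ω m K ≤ stabilizer G (orbit K x) := sSup_le fun L hL g hg ↦ by
    rw [mem_stabilizer_iff, horbit hL.1 hL.2]
    exact smul_orbit (⟨g, hg⟩ : L) x
  rintro _ ⟨g, rfl⟩
  have hmem : (g : G) • x ∈ (g : G) • orbit K x := smul_mem_smul_set (mem_orbit_self x)
  rwa [mem_stabilizer_iff.mp (hstab g.2)] at hmem

theorem IsStrong.encard_orbit_strongJoin_le
    (h : ∀ x y : Ω, (orbit (stabilizer G x) y).encard ≤ n)
    (hm : IsLeast {k | ∃ K : Subgroup G, IsStrong Ω k K} m) (hK : IsStrong Ω m K) (y : Ω) :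
    (orbit (strongJoin Ω m K) y).encard ≤ (m * n : ℕ) := by
  have : Nonempty Ω := ⟨y⟩
  obtain ⟨x, hx⟩ := hK.exists_encard_orbit_eq hm
  exact (encard_le_encard
      (orbit_subset_biUnion_orbit_stabilizer (orbit_strongJoin_subset hx) y)).trans
    (encard_biUnion_le_mul (hK.encard_orbit_le y) fun z _ ↦ h x z)

theorem strongJoin_bot_normal : (strongJoin Ω m (⊥ : Subgroup G)).Normal where
  conj_mem x hx g := by
    have hle : strongJoin Ω m ⊥ ≤ (strongJoin Ω m ⊥).comap (MulAut.conj g).toMonoidHom :=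
      sSup_le fun L hL y hy ↦ (hL.1.conj_smul g).le_strongJoin_of_le bot_le
        (Subgroup.smul_mem_pointwise_smul y (MulAut.conj g) L hy)
    exact hle hx

theorem directed_strongJoin :
    Directed (· ≤ ·) fun K : {K : Subgroup G // IsStrong Ω m K} ↦ strongJoin Ω m K.1 :=
  fun K L ↦ ⟨⟨K ⊓ L, K.2.inf L.2⟩, strongJoin_antitone inf_le_left,
    strongJoin_antitone inf_le_right⟩

theorem strongJoin_bot_le_iSup :
    strongJoin Ω m ⊥ ≤ ⨆ K : {K : Subgroup G // IsStrong Ω m K}, strongJoin Ω m K.1 :=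
  sSup_le fun K hK ↦ (hK.1.le_strongJoin_of_le le_rfl).trans
    (le_iSup (fun K : {K : Subgroup G // IsStrong Ω m K} ↦ strongJoin Ω m K.1) ⟨K, hK.1⟩)

theorem encard_orbit_strongJoin_bot_le (h : ∀ x y : Ω, (orbit (stabilizer G x) y).encard ≤ n)
    (hm : IsLeast {k | ∃ K : Subgroup G, IsStrong Ω k K} m) (x : Ω) :
    (orbit (strongJoin Ω m (⊥ : Subgroup G)) x).encard ≤ (m * n : ℕ) := by
  have : Nonempty {K : Subgroup G // IsStrong Ω m K} := nonempty_subtype.mpr hm.1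
  have hcover : orbit (strongJoin Ω m (⊥ : Subgroup G)) x ⊆
      ⋃ K : {K : Subgroup G // IsStrong Ω m K}, orbit (strongJoin Ω m K.1) x := by
    rintro _ ⟨g, rfl⟩
    obtain ⟨K, hK⟩ :=
      (Subgroup.mem_iSup_of_directed directed_strongJoin).mp (strongJoin_bot_le_iSup g.2)
    exact mem_iUnion_of_mem K ⟨⟨g, hK⟩, rfl⟩
  have hdir : Directed (· ⊆ ·)
      fun K : {K : Subgroup G // IsStrong Ω m K} ↦ orbit (strongJoin Ω m K.1) x := fun K L ↦
    let ⟨M, hKM, hLM⟩ := directed_strongJoin K L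
    ⟨M, orbit_subset_orbit_of_le hKM x, orbit_subset_orbit_of_le hLM x⟩
  exact (encard_le_encard hcover).trans
    (encard_iUnion_le_of_directed hdir fun K ↦ K.2.encard_orbit_strongJoin_le h hm x)

theorem exists_normal_commensurable_stabilizer
    (h : ∀ x y : Ω, (orbit (stabilizer G x) y).encard ≤ n) :
    ∃ N : Subgroup G, N.Normal ∧ ∀ x : Ω, N.Commensurable (stabilizer G x) := by
  cases isEmpty_or_nonempty Ω
  · exact ⟨⊥, inferInstance, isEmptyElim⟩
  have hex : {k | ∃ K : Subgroup G, IsStrong Ω k K}.Nonempty :=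
    ⟨n, _, isStrong_stabilizer h (Classical.arbitrary Ω)⟩
  obtain ⟨m, hm⟩ : ∃ m, IsLeast {k | ∃ K : Subgroup G, IsStrong Ω k K} m :=
    ⟨_, Nat.sInf_mem hex, fun _ ↦ Nat.sInf_le⟩
  obtain ⟨K, hK⟩ := hm.1
  have hle : K ≤ strongJoin Ω m ⊥ := hK.le_strongJoin_of_le bot_le
  refine ⟨strongJoin Ω m ⊥, strongJoin_bot_normal, fun x ↦ ⟨fun hzero ↦ ?_, ?_⟩⟩
  · exact hK.relIndex_stabilizer_ne_zero x (Subgroup.relIndex_eq_zero_of_le_left hle hzero)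
  · exact stabilizer_relIndex_ne_zero_iff.mpr
      (finite_of_encard_le_coe (encard_orbit_strongJoin_bot_le h hm x))

end Schlichting

section Primitive

variable {G Ω : Type*} [Group G] [MulAction G Ω]

theorem IsPrimitive.isQuasiPreprimitive (h : IsPrimitive G Ω) : IsQuasiPreprimitive G Ω := by
  have := h.1
  refine ⟨fun {N} hN hfix ↦ ?_⟩
  have hinv (g : G) (x y : Ω) (hxy : orbitRel N Ω x y) : orbitRel N Ω (g • x) (g • y) := by
    obtain ⟨k, rfl⟩ := hxy
    exact ⟨⟨g * k * g⁻¹, hN.conj_mem k k.2 g⟩, by simp [Subgroup.smul_def, mul_smul]⟩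
  rcases h.2 _ (orbitRel N Ω).iseqv hinv with huniv | htriv
  · exact ⟨fun x y ↦ huniv y x⟩
  · exact absurd (eq_univ_of_forall fun x k ↦ htriv _ _ (mem_orbit x k)) hfix

theorem eq_bot_of_fixedPoints_eq_univ [FaithfulSMul G Ω] {N : Subgroup G}
    (h : fixedPoints N Ω = univ) : N = ⊥ := by
  refine N.eq_bot_iff_forall.mpr fun g hg ↦ eq_of_smul_eq_smul fun x : Ω ↦ ?_
  have hx : x ∈ fixedPoints N Ω := h ▸ mem_univ x
  rw [one_smul]
  exact hx ⟨g, hg⟩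

end Primitive

theorem stabilizer_finite_of_bounded_suborbits_general {G Ω : Type*} [Group G] [MulAction G Ω]
    [FaithfulSMul G Ω] [IsQuasiPreprimitive G Ω] (α : Ω)
    (h : ∃ n : ℕ, ∀ β : Ω, Cardinal.mk (orbit (stabilizer G α) β) ≤ (n : Cardinal)) :
    Finite (stabilizer G α) := by
  obtain ⟨n, hn⟩ := h
  obtain ⟨N, _, hcomm⟩ := exists_normal_commensurable_stabilizer
    (encard_orbit_stabilizer_le fun β ↦ Cardinal.toENat_le_natCast.mpr (hn β))
  by_cases hfix : fixedPoints N Ω = univ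
  · have hcard : Nat.card (stabilizer G α) ≠ 0 := by
      simpa [eq_bot_of_fixedPoints_eq_univ hfix] using (hcomm α).1
    exact Nat.finite_of_card_ne_zero hcard
  · have : IsPretransitive N Ω := IsQuasiPreprimitive.isPretransitive_of_normal hfix
    have : Finite Ω := by
      rw [← finite_univ_iff, ← orbit_eq_univ N α]
      exact stabilizer_relIndex_ne_zero_iff.mp (hcomm α).2
    have : Finite G := .of_injective _ (toPerm_injective (α := G) (β := Ω))
    infer_instance

/-- If `G` is a primitive group of permutations of an infinite set `Ω`, `α ∈ Ω`,
and the cardinalities of the orbits of the point stabilizer `G_α` on `Ω` are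
bounded above by a finite cardinal, then `G_α` is finite. -/
theorem stabilizer_finite_of_bounded_suborbits {G Ω : Type*} [Group G] [MulAction G Ω]
    [FaithfulSMul G Ω] [Infinite Ω]
    (hprim : IsPrimitive G Ω) (α : Ω)
    (h : ∃ n : ℕ, ∀ β : Ω,
      Cardinal.mk (MulAction.orbit (MulAction.stabilizer G α) β) ≤ (n : Cardinal)) :
    Finite (MulAction.stabilizer G α) :=
  have := hprim.isQuasiPreprimitive
  stabilizer_finite_of_bounded_suborbits_general α h
end

section
/- Let G be a group acting primitively on an infinite set Ω. If the subdegrees of G are bounded above by a finite cardinal, then Ω is countably infinite. -/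
/-!
The stabilizer `H` of a point `α` in a primitive group is a maximal subgroup, so `G` is generated
by `H` together with a single further element `g`. Every point is therefore reached from `α` by
finitely many steps, each of which applies an element of `H` or a power of `g`. For an infinite
cardinal `κ` bounding the sizes of the orbits of `H`, each step leads from a set of at most `κ`
points to at most `κ` points, hence `Ω` itself has at most `κ` points.
-/

universe u v

open Cardinal MulAction
open scoped Pointwise

theorem IsPrimitive.isPreprimitive {G Ω : Type*} [Group G] [MulAction G Ω]
    (hprim : IsPrimitive G Ω) : IsPreprimitive G Ω where
  toIsPretransitive := hprim.1
  isTrivialBlock_of_isBlock {B} hB := by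
    -- For a nonempty block `B`, this relation says that `x` and `y` lie in the same translate.
    let r (x y : Ω) : Prop := ∀ g : G, x ∈ g • B ↔ y ∈ g • B
    have r_equivalence : Equivalence r :=
      ⟨fun _ _ => Iff.rfl, fun h g => (h g).symm, fun h h' g => (h g).trans (h' g)⟩
    have r_smul (g : G) (x y : Ω) (hxy : r x y) : r (g • x) (g • y) := fun k => by
      simpa only [Set.mem_smul_set_iff_inv_smul_mem, mul_smul, mul_inv_rev, inv_inv]
        using hxy (g⁻¹ * k)
    rcases hprim.2 r r_equivalence r_smul with r_univ | r_eq
    · rcases B.eq_empty_or_nonempty with rfl | ⟨b, hb⟩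
      · exact .inl Set.subsingleton_empty
      · refine .inr (Set.eq_univ_of_forall fun x => ?_)
        simpa only [one_smul, hb, iff_true] using r_univ x b 1
    · refine .inl fun x hx y hy => r_eq x y fun g => ?_
      have mem_smul {x y : Ω} (hx : x ∈ B) (hy : y ∈ B) (hxg : x ∈ g • B) : y ∈ g • B :=
        (hB.smul_eq_of_nonempty ⟨x, hxg, hx⟩).symm ▸ hy
      exact ⟨mem_smul hx hy, mem_smul hy hx⟩

theorem coe_submonoidClosure_eq_iUnion_pow {M : Type*} [Monoid M] (S : Set M) :
    (Submonoid.closure S : Set M) = ⋃ n : ℕ, S ^ n := by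
  refine Set.Subset.antisymm (fun m hm => ?_)
    (Set.iUnion_subset fun _ => Submonoid.pow_subset Submonoid.subset_closure)
  induction hm using Submonoid.closure_induction with
  | mem m hm => exact Set.mem_iUnion.2 ⟨1, by rwa [pow_one]⟩
  | one => exact Set.mem_iUnion.2 ⟨0, Set.mem_one.2 rfl⟩
  | mul a b _ _ iha ihb =>
    obtain ⟨m, hm⟩ := Set.mem_iUnion.1 iha
    obtain ⟨n, hn⟩ := Set.mem_iUnion.1 ihb
    exact Set.mem_iUnion.2 ⟨m + n, pow_add S m n ▸ Set.mul_mem_mul hm hn⟩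

theorem orbit_subgroup_eq_smul_singleton {G X : Type*} [Group G] [MulAction G X]
    (H : Subgroup G) (x : X) : orbit H x = (H : Set G) • {x} := by
  rw [Set.smul_singleton, Set.image_eq_range]
  rfl

section

variable {X : Type u} {κ : Cardinal.{u}}

theorem mk_iUnion_le_of_countable {ι : Type v} [Countable ι] (hκ : ℵ₀ ≤ κ) {f : ι → Set X}
    (hf : ∀ i, #(f i) ≤ κ) : #(⋃ i, f i) ≤ κ := by
  have lift_mk_le : lift.{u} #ι ≤ lift.{v} κ :=
    (lift_le_aleph0.2 mk_le_aleph0).trans (aleph0_le_lift.2 hκ)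
  refine lift_le.{v}.1 ?_
  calc lift.{v} #(⋃ i, f i) ≤ lift.{u} #ι * ⨆ i, lift.{v} #(f i) := mk_iUnion_le_lift f
    _ ≤ lift.{v} κ * lift.{v} κ := mul_le_mul' lift_mk_le (ciSup_le' fun i => lift_le.2 (hf i))
    _ = lift.{v} κ := mul_eq_self (aleph0_le_lift.2 hκ)

theorem mk_smul_set_le {M : Type*} [SMul M X] (hκ : ℵ₀ ≤ κ) {S : Set M}
    (hS : ∀ x : X, #(S • {x} : Set X) ≤ κ) {T : Set X} (hT : #T ≤ κ) :
    #(S • T : Set X) ≤ κ := by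
  have smul_eq_biUnion : S • T = ⋃ x ∈ T, S • {x} := by
    simp only [Set.smul_singleton, Set.iUnion_smul_right_image]
  calc #(S • T : Set X) ≤ #T * ⨆ x : T, #(S • {x.1} : Set X) :=
        smul_eq_biUnion ▸ mk_biUnion_le _ _
    _ ≤ κ * κ := mul_le_mul' hT (ciSup_le' fun x => hS x)
    _ = κ := mul_eq_self hκ

theorem mk_closure_smul_singleton_le {M : Type*} [Monoid M] [MulAction M X] (hκ : ℵ₀ ≤ κ)
    {S : Set M} (hS : ∀ x : X, #(S • {x} : Set X) ≤ κ) (x : X) :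
    #((Submonoid.closure S : Set M) • {x} : Set X) ≤ κ := by
  have pow_le (n : ℕ) : #(S ^ n • {x} : Set X) ≤ κ := by
    induction n with
    | zero => simpa only [pow_zero, one_smul, mk_singleton] using one_le_aleph0.trans hκ
    | succ n ih => simpa only [pow_succ', mul_smul] using mk_smul_set_le hκ hS ih
  rw [coe_submonoidClosure_eq_iUnion_pow, Set.iUnion_smul]
  exact mk_iUnion_le_of_countable hκ pow_le

theorem mk_orbit_sup_le {G : Type*} [Group G] [MulAction G X] (hκ : ℵ₀ ≤ κ) {H K : Subgroup G}
    (hH : ∀ x : X, #(orbit H x) ≤ κ) (hK : ∀ x : X, #(orbit K x) ≤ κ) (x : X) :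
    #(orbit ↥(H ⊔ K) x) ≤ κ := by
  have coe_sup : ((H ⊔ K : Subgroup G) : Set G) = Submonoid.closure (H ∪ K : Set G) := by
    rw [Subgroup.sup_eq_closure, ← Subgroup.coe_toSubmonoid, Subgroup.closure_toSubmonoid,
      Set.union_inv, inv_coe_set, inv_coe_set, Set.union_self]
  simp only [orbit_subgroup_eq_smul_singleton] at hH hK ⊢
  rw [coe_sup]
  refine mk_closure_smul_singleton_le hκ (fun y => ?_) x
  rw [Set.union_smul]
  exact (mk_union_le _ _).trans (add_le_of_le hκ (hH y) (hK y))

end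

theorem countably_infinite_of_bounded_subdegrees_general {G : Type*} {Ω : Type u} [Group G]
    [MulAction G Ω] [IsPreprimitive G Ω] {κ : Cardinal.{u}} (hκ : ℵ₀ ≤ κ) (α : Ω)
    (h : ∀ β : Ω, #(orbit (stabilizer G α) β) ≤ κ) : #Ω ≤ κ := by
  rcases subsingleton_or_nontrivial Ω with _ | _
  · exact (le_one_iff_subsingleton.2 inferInstance).trans (one_le_aleph0.trans hκ)
  have stabilizer_isCoatom : IsCoatom (stabilizer G α) :=
    IsPreprimitive.isCoatom_stabilizer_of_isPreprimitive G α
  obtain ⟨g, hg⟩ := SetLike.exists_not_mem_of_ne_top _ stabilizer_isCoatom.1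
  have sup_eq_top : stabilizer G α ⊔ Subgroup.zpowers g = ⊤ :=
    stabilizer_isCoatom.2 _ (left_lt_sup.2 (mt Subgroup.zpowers_le.1 hg))
  have orbit_zpowers_le (β : Ω) : #(orbit (Subgroup.zpowers g) β) ≤ κ :=
    (le_aleph0_iff_set_countable.2 (Set.countable_range _)).trans hκ
  have orbit_le := mk_orbit_sup_le hκ h orbit_zpowers_le α
  have orbit_top : orbit (⊤ : Subgroup G) α = Set.univ := by
    rw [orbit_subgroup_eq_smul_singleton, Subgroup.coe_top, Set.smul_singleton, Set.image_univ]
    exact orbit_eq_univ G α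
  rwa [sup_eq_top, orbit_top, mk_univ] at orbit_le

/-- If `G` acts primitively on an infinite set `Ω` and the subdegrees of `G` are
bounded above by a finite cardinal, then `Ω` is countably infinite. -/
theorem countably_infinite_of_bounded_subdegrees {G Ω : Type*} [Group G] [MulAction G Ω]
    [FaithfulSMul G Ω] [Infinite Ω]
    (hprim : IsPrimitive G Ω)
    (h : ∃ n : ℕ, ∀ α β : Ω,
      Cardinal.mk (MulAction.orbit (MulAction.stabilizer G α) β) ≤ (n : Cardinal)) :
    Cardinal.mk Ω = Cardinal.aleph0 := by
  obtain ⟨n, hn⟩ := h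
  have := hprim.isPreprimitive
  obtain ⟨α⟩ : Nonempty Ω := inferInstance
  exact le_antisymm (countably_infinite_of_bounded_subdegrees_general le_rfl α
    fun β => (hn α β).trans natCast_le_aleph0) (aleph0_le_mk Ω)
end
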